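/- arXiv:2601.07176 — 4 statements merged into one kernel-verified Lean document; each statement's English description precedes it below -/
import Mathlib

section
/- For every a ∈ ℝ, every real p ≥ 1 and every T > 0 there exists a constant C > 0 such that for all t ∈ (0, T], all x ∈ ℝ, and all ε with 0 < ε ≤ min(1, t/√2): |∫₀^t ∫_ℝ |Γ_a(t−s, x−y) − Γ_a(t−ε/√2−s, x+ε/√2−y) − Γ_a(t−ε/√2−s, x−ε/√2−y) + Γ_a(t−√2·ε−s, x−y)|^p dy ds − ε²/2^p| ≤ C·(ε³ + ε^{1+p}). -/
open MeasureTheory Real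

/-- The damped wave kernel: the fundamental solution of the critically damped
wave operator `∂_tt − ∂_xx + a ∂_t + a²/4`. -/
noncomputable def dampedKernel (a t x : ℝ) : ℝ :=
  if |x| < t then (1 / 2) * Real.exp (-(a * t) / 2) else 0

/-- The rectangular increment of the damped wave kernel along the two characteristic directions. -/
noncomputable def kernelIncrement (a h r z : ℝ) : ℝ :=
  dampedKernel a r z - dampedKernel a (r - h) (z + h) - dampedKernel a (r - h) (z - h)
    + dampedKernel a (r - 2 * h) z

/-- The slice at time `r` of the characteristic square of side `2 * h` at the tip of the cone. -/
def tipSlice (h r : ℝ) : Set ℝ := Set.Ioo (-r) r ∩ Set.Icc (r - 2 * h) (2 * h - r)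

/-- The length of `tipSlice h r`. -/
noncomputable def tipLength (h r : ℝ) : ℝ := max (min (2 * r) (4 * h - 2 * r)) 0

lemma measurableSet_tipSlice (h r : ℝ) : MeasurableSet (tipSlice h r) :=
  measurableSet_Ioo.inter measurableSet_Icc

lemma continuous_tipLength (h : ℝ) : Continuous (tipLength h) := by
  unfold tipLength; fun_prop

lemma volume_real_tipSlice (h r : ℝ) : volume.real (tipSlice h r) = tipLength h r := by
  unfold tipSlice tipLength
  rcases le_or_gt r h with hr | hr
  · have : Set.Ioo (-r) r ∩ Set.Icc (r - 2 * h) (2 * h - r) = Set.Ioo (-r) r := by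
      rw [Set.inter_eq_left]
      intro z hz
      exact ⟨by linarith [hz.1], by linarith [hz.2]⟩
    rw [this, Real.volume_real_Ioo, min_eq_left (by linarith)]
    ring_nf
  · have : Set.Ioo (-r) r ∩ Set.Icc (r - 2 * h) (2 * h - r) = Set.Icc (r - 2 * h) (2 * h - r) := by
      rw [Set.inter_eq_right]
      intro z hz
      exact ⟨by linarith [hz.1], by linarith [hz.2]⟩
    rw [this, Real.volume_real_Icc, min_eq_right (by linarith)]
    ring_nf

lemma integral_tipLength {h t : ℝ} (hh : 0 ≤ h) (ht : 2 * h ≤ t) :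
    ∫ r in (0 : ℝ)..t, tipLength h r = 2 * h ^ 2 := by
  have hint (u v : ℝ) : IntervalIntegrable (tipLength h) volume u v :=
    (continuous_tipLength h).intervalIntegrable u v
  have hrise : ∫ r in (0 : ℝ)..h, tipLength h r = ∫ r in (0 : ℝ)..h, 2 * r := by
    refine intervalIntegral.integral_congr fun r hr => ?_
    rw [Set.uIcc_of_le hh] at hr
    simp only [tipLength]
    rw [min_eq_left (by linarith [hr.2]), max_eq_left (by linarith [hr.1])]
  have hfall : ∫ r in h..(2 * h), tipLength h r = ∫ r in h..(2 * h), (4 * h - 2 * r) := by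
    refine intervalIntegral.integral_congr fun r hr => ?_
    rw [Set.uIcc_of_le (by linarith)] at hr
    simp only [tipLength]
    rw [min_eq_right (by linarith [hr.1]), max_eq_left (by linarith [hr.2])]
  have hzero : ∫ r in (2 * h)..t, tipLength h r = ∫ r in (2 * h)..t, (0 : ℝ) := by
    refine intervalIntegral.integral_congr fun r hr => ?_
    rw [Set.uIcc_of_le ht] at hr
    simp only [tipLength]
    rw [max_eq_right ((min_le_right _ _).trans (by linarith [hr.1]))]
  rw [← intervalIntegral.integral_add_adjacent_intervals (hint 0 h) (hint h t),
    ← intervalIntegral.integral_add_adjacent_intervals (hint h (2 * h)) (hint (2 * h) t),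
    hrise, hfall, hzero,
    intervalIntegral.integral_sub (by simp) (Continuous.intervalIntegrable (by fun_prop) _ _)]
  have hlin (u v : ℝ) : ∫ r in u..v, 2 * r = v ^ 2 - u ^ 2 := by
    rw [intervalIntegral.integral_const_mul, integral_id]
    ring
  simp only [hlin, intervalIntegral.integral_const, smul_eq_mul]
  ring

lemma measurable_kernelIncrement (a h : ℝ) :
    Measurable fun q : ℝ × ℝ => kernelIncrement a h q.1 q.2 := by
  have hker : Measurable fun q : ℝ × ℝ => dampedKernel a q.1 q.2 := by
    unfold dampedKernel
    refine Measurable.ite (measurableSet_lt (by fun_prop) (by fun_prop)) (by fun_prop) (by fun_prop)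
  have hcomp {f g : ℝ × ℝ → ℝ} (hf : Measurable f) (hg : Measurable g) :
      Measurable fun q : ℝ × ℝ => dampedKernel a (f q) (g q) := hker.comp (hf.prodMk hg)
  unfold kernelIncrement
  exact (((hcomp (by fun_prop) (by fun_prop)).sub (hcomp (by fun_prop) (by fun_prop))).sub
    (hcomp (by fun_prop) (by fun_prop))).add (hcomp (by fun_prop) (by fun_prop))

lemma abs_exp_sub_one_le_mul_exp (y : ℝ) : |exp y - 1| ≤ |y| * exp |y| := by
  have h := Real.add_one_le_exp y
  have h' := Real.add_one_le_exp (-y)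
  have hmul : exp y * exp (-y) = 1 := by rw [← exp_add]; simp
  have hy := exp_pos y
  rcases le_total 0 y with hy0 | hy0
  · rw [abs_of_nonneg hy0, abs_of_nonneg (by linarith)]
    nlinarith
  · rw [abs_of_nonpos hy0, abs_of_nonpos (by linarith [Real.exp_le_one_iff.2 hy0])]
    nlinarith [Real.one_le_exp (show 0 ≤ -y by linarith)]

/-- Off the tip square the increment is a first difference of the exponential near the boundary of
the cone, and a second difference inside it. -/
lemma exists_abs_kernelIncrement_rpow_le (a p T : ℝ) (hp : 1 ≤ p) :
    ∃ K : ℝ, 0 < K ∧ ∀ h r z : ℝ, 0 < h → h ≤ 1 → 0 < r → r ≤ T →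
      |(|kernelIncrement a h r z| ^ p) - (tipSlice h r).indicator (fun _ => 1 / 2 ^ p) z| ≤
        (tipSlice h r).indicator (fun _ => K * h) z
        + (Set.Ioc (-r) (2 * h - r)).indicator (fun _ => K * h ^ p) z
        + (Set.Ico (r - 2 * h) r).indicator (fun _ => K * h ^ p) z
        + (Set.Ioc (-r) r).indicator (fun _ => K * h ^ (1 + p)) z := by
  have hp0 : 0 < p := by linarith
  obtain ⟨M, hM, hexp⟩ : ∃ M : ℝ, 0 < M ∧ ∀ r, 0 ≤ r → r ≤ T →
      1 / 2 * exp (-(a * r) / 2) ≤ M := by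
    refine ⟨exp (|a| * T / 2), exp_pos _, fun r hr hrT => ?_⟩
    have : exp (-(a * r) / 2) ≤ exp (|a| * T / 2) := by
      apply Real.exp_le_exp.2
      nlinarith [neg_abs_le a, abs_nonneg a, mul_nonneg (abs_nonneg a) (sub_nonneg.2 hrT)]
    linarith [exp_pos (-(a * r) / 2)]
  obtain ⟨L, hL, hone⟩ : ∃ L : ℝ, 0 < L ∧ ∀ h, 0 < h → h ≤ 1 →
      |exp (-(a * h) / 2) - 1| ≤ L * h := by
    refine ⟨(|a| + 1) * exp |a|, by positivity, fun h hh h1 => ?_⟩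
    have heq : |-(a * h) / 2| = |a| * h / 2 := by
      rw [abs_div, abs_neg, abs_mul, abs_of_pos hh]; simp
    refine (abs_exp_sub_one_le_mul_exp _).trans ?_
    rw [heq]
    have : exp (|a| * h / 2) ≤ exp |a| := by
      apply Real.exp_le_exp.2
      nlinarith [abs_nonneg a]
    calc |a| * h / 2 * exp (|a| * h / 2) ≤ ((|a| + 1) * h) * exp |a| := by
          gcongr
          nlinarith [abs_nonneg a]
      _ = _ := by ring
  obtain ⟨N, hN, htip⟩ : ∃ N : ℝ, 0 < N ∧ ∀ r, 0 < r → r ≤ T →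
      |(1 / 2 * exp (-(a * r) / 2)) ^ p - 1 / 2 ^ p| ≤ N * r := by
    refine ⟨(|a| + 1) * p * exp (|a| * T * p), by positivity, fun r hr hrT => ?_⟩
    have heq : |-(a * r) / 2 * p| = |a| * r / 2 * p := by
      rw [abs_mul, abs_div, abs_neg, abs_mul, abs_of_pos hr, abs_of_pos hp0]; simp
    rw [Real.mul_rpow (by norm_num) (exp_pos _).le, ← Real.exp_mul,
      Real.div_rpow (by norm_num) (by norm_num), Real.one_rpow, ← mul_sub_one, abs_mul,
      abs_of_pos (by positivity : (0 : ℝ) < 1 / 2 ^ p)]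
    have h2 : (1 : ℝ) / 2 ^ p ≤ 1 :=
      (div_le_one (by positivity)).2 (Real.one_le_rpow (by norm_num) hp0.le)
    have hle : exp (|a| * r / 2 * p) ≤ exp (|a| * T * p) := by
      apply Real.exp_le_exp.2
      gcongr ?_ * p
      nlinarith [abs_nonneg a, mul_nonneg (abs_nonneg a) (sub_nonneg.2 hrT),
        mul_nonneg (abs_nonneg a) hr.le]
    calc 1 / 2 ^ p * |exp (-(a * r) / 2 * p) - 1|
        ≤ 1 * (|-(a * r) / 2 * p| * exp |-(a * r) / 2 * p|) := by
          gcongr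
          exact abs_exp_sub_one_le_mul_exp _
      _ ≤ ((|a| + 1) * r * p) * exp (|a| * T * p) := by
          rw [heq, one_mul]
          gcongr ?_ * p * ?_
          nlinarith [abs_nonneg a, mul_nonneg (abs_nonneg a) hr.le]
      _ = _ := by ring
  set K : ℝ := 2 * N + (M * L) ^ p + (M * L ^ 2) ^ p with hK
  have hML : 0 < (M * L) ^ p := by positivity
  have hMLL : 0 < (M * L ^ 2) ^ p := by positivity
  refine ⟨K, by positivity, fun h r z hh h1 hr hrT => ?_⟩
  have hshift (s : ℝ) : exp (-(a * s) / 2) = exp (-(a * (s - h)) / 2) * exp (-(a * h) / 2) := by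
    rw [← exp_add]; congr 1; ring
  have hKtip : 0 ≤ K * h := by positivity
  have hKp : 0 ≤ K * h ^ p := by positivity
  have hKpp : 0 ≤ K * h ^ (1 + p) := by positivity
  have hfirst (hrh : h ≤ r) : |1 / 2 * exp (-(a * r) / 2) - 1 / 2 * exp (-(a * (r - h)) / 2)| ^ p
      ≤ K * h ^ p := by
    have : |1 / 2 * exp (-(a * r) / 2) - 1 / 2 * exp (-(a * (r - h)) / 2)| ≤ M * L * h := by
      rw [hshift r, ← mul_assoc, ← mul_sub_one, abs_mul, abs_of_pos (by positivity), mul_assoc M]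
      exact mul_le_mul (hexp _ (by linarith) (by linarith)) (hone h hh h1) (abs_nonneg _) hM.le
    calc _ ≤ (M * L * h) ^ p := by gcongr
      _ = (M * L) ^ p * h ^ p := Real.mul_rpow (by positivity) hh.le
      _ ≤ K * h ^ p := by
        gcongr
        rw [hK]
        linarith
  have hsecond (hrh : 2 * h ≤ r) : |1 / 2 * exp (-(a * r) / 2)
      - 1 / 2 * exp (-(a * (r - h)) / 2) - 1 / 2 * exp (-(a * (r - h)) / 2)
      + 1 / 2 * exp (-(a * (r - 2 * h)) / 2)| ^ p ≤ K * h ^ (1 + p) := by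
    have : |1 / 2 * exp (-(a * r) / 2)
      - 1 / 2 * exp (-(a * (r - h)) / 2) - 1 / 2 * exp (-(a * (r - h)) / 2)
      + 1 / 2 * exp (-(a * (r - 2 * h)) / 2)| ≤ M * L ^ 2 * h ^ 2 := by
      have heq : 1 / 2 * exp (-(a * r) / 2)
          - 1 / 2 * exp (-(a * (r - h)) / 2) - 1 / 2 * exp (-(a * (r - h)) / 2)
          + 1 / 2 * exp (-(a * (r - 2 * h)) / 2)
          = 1 / 2 * exp (-(a * (r - 2 * h)) / 2) * (exp (-(a * h) / 2) - 1) ^ 2 := by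
        rw [hshift r, hshift (r - h), show r - h - h = r - 2 * h by ring]
        ring
      rw [heq, abs_mul, abs_of_pos (by positivity), abs_pow, mul_assoc M, ← mul_pow]
      exact mul_le_mul (hexp _ (by linarith) (by linarith))
        (pow_le_pow_left₀ (abs_nonneg _) (hone h hh h1) 2) (by positivity) hM.le
    calc _ ≤ (M * L ^ 2 * h ^ 2) ^ p := by gcongr
      _ = (M * L ^ 2) ^ p * (h ^ 2) ^ p := Real.mul_rpow (by positivity) (by positivity)
      _ ≤ K * h ^ (1 + p) := by
        have : (h ^ 2) ^ p ≤ h ^ (1 + p) := by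
          rw [← Real.rpow_natCast, ← Real.rpow_mul hh.le]
          exact Real.rpow_le_rpow_of_exponent_ge hh h1 (by push_cast; linarith)
        gcongr
        rw [hK]
        linarith
  have hcone (s w : ℝ) : dampedKernel a s w =
      if -s < w ∧ w < s then 1 / 2 * exp (-(a * s) / 2) else 0 := by
    simp only [dampedKernel, abs_lt]
  have hright : (-(r - h) < z + h ∧ z + h < r - h) ↔ (-r < z ∧ z < r - 2 * h) := by
    constructor <;> rintro ⟨_, _⟩ <;> constructor <;> linarith
  have hleft : (-(r - h) < z - h ∧ z - h < r - h) ↔ (2 * h - r < z ∧ z < r) := by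
    constructor <;> rintro ⟨_, _⟩ <;> constructor <;> linarith
  have hinner : (-(r - 2 * h) < z ∧ z < r - 2 * h) ↔ (2 * h - r < z ∧ z < r - 2 * h) := by
    constructor <;> rintro ⟨_, _⟩ <;> constructor <;> linarith
  simp only [kernelIncrement, hcone, hright, hleft, hinner, Set.indicator_apply, tipSlice,
    Set.mem_inter_iff, Set.mem_Ioo, Set.mem_Icc, Set.mem_Ioc, Set.mem_Ico]
  by_cases hzl : -r < z
  swap
  · have hw : ¬ 2 * h - r < z := by linarith
    simp only [hzl, hw, false_and, if_false, sub_zero, add_zero, abs_zero,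
      Real.zero_rpow hp0.ne']
    split_ifs <;> linarith
  by_cases hzr : z < r
  swap
  · have hw : ¬ z < r - 2 * h := by linarith
    simp only [hzr, hw, and_false, false_and, if_false, sub_zero, add_zero, abs_zero,
      Real.zero_rpow hp0.ne']
    split_ifs <;> linarith
  have hzr' : z ≤ r := hzr.le
  by_cases hu : 2 * h - r < z <;> by_cases hv : z < r - 2 * h
  · have hu' : ¬ z ≤ 2 * h - r := by linarith
    have hv' : ¬ r - 2 * h ≤ z := by linarith
    simp only [hzl, hzr, hzr', hu, hv, hu', hv', and_true, and_false, if_true, if_false,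
      sub_zero, zero_add, abs_of_nonneg (Real.rpow_nonneg (abs_nonneg _) p)]
    exact hsecond (by linarith)
  · have hu' : ¬ z ≤ 2 * h - r := by linarith
    have hv' : r - 2 * h ≤ z := by linarith
    simp only [hzl, hzr, hzr', hu, hv, hu', hv', and_true, and_false, if_true, if_false,
      sub_zero, zero_add, add_zero,
      abs_of_nonneg (Real.rpow_nonneg (abs_nonneg _) p)]
    have := hfirst (by linarith)
    linarith
  · have hu' : z ≤ 2 * h - r := by linarith
    have hv' : ¬ r - 2 * h ≤ z := by linarith
    simp only [hzl, hzr, hzr', hu, hv, hu', hv', and_true, and_false, if_true, if_false,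
      sub_zero, zero_add, add_zero,
      abs_of_nonneg (Real.rpow_nonneg (abs_nonneg _) p)]
    have := hfirst (by linarith)
    linarith
  · have hu' : z ≤ 2 * h - r := by linarith
    have hv' : r - 2 * h ≤ z := by linarith
    simp only [hzl, hzr, hzr', hu, hv, hu', hv', and_true, and_false, if_true, if_false,
      sub_zero, add_zero]
    rw [abs_of_pos (by positivity : 0 < 1 / 2 * exp (-(a * r) / 2))]
    have hr2 : r ≤ 2 * h := by linarith
    have h3 : N * r ≤ K * h := by
      have : N * r ≤ N * (2 * h) := by gcongr
      rw [hK]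
      nlinarith
    linarith [htip r hr hrT]

/-- The slice-wise form of the estimate on the kernel increment. -/
lemma exists_abs_integral_kernelIncrement_sub_le (a p T : ℝ) (hp : 1 ≤ p) (hT : 0 < T) :
    ∃ K : ℝ, 0 < K ∧ ∀ h r : ℝ, 0 < h → h ≤ 1 → 0 < r → r ≤ T →
      |(∫ z, |kernelIncrement a h r z| ^ p) - 1 / 2 ^ p * tipLength h r| ≤
        K * h * tipLength h r + K * h ^ (1 + p) := by
  obtain ⟨K, hK, hbound⟩ := exists_abs_kernelIncrement_rpow_le a p T hp
  refine ⟨K * (4 + 2 * T), by positivity, fun h r hh h1 hr hrT => ?_⟩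
  have hind {s : Set ℝ} (hs : MeasurableSet s) (hfin : volume s ≠ ⊤) (c : ℝ) :
      Integrable (s.indicator fun _ => c) :=
    (integrable_indicator_iff hs).2 (integrableOn_const hfin)
  have htip (c : ℝ) : Integrable ((tipSlice h r).indicator fun _ => c) :=
    hind (measurableSet_tipSlice h r)
      ((measure_mono Set.inter_subset_left).trans_lt measure_Ioo_lt_top).ne c
  have hleft := hind (s := Set.Ioc (-r) (2 * h - r)) measurableSet_Ioc
    measure_Ioc_lt_top.ne (K * h ^ p)
  have hright := hind (s := Set.Ico (r - 2 * h) r) measurableSet_Ico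
    measure_Ico_lt_top.ne (K * h ^ p)
  have hcone := hind (s := Set.Ioc (-r) r) measurableSet_Ioc
    measure_Ioc_lt_top.ne (K * h ^ (1 + p))
  have hdom := (((htip (K * h)).add hleft).add hright).add hcone
  have hmeas : Measurable fun z => |kernelIncrement a h r z| ^ p :=
    (((measurable_kernelIncrement a h).comp measurable_prodMk_left).abs).pow_const p
  have hdiff : Integrable fun z => |kernelIncrement a h r z| ^ p
      - (tipSlice h r).indicator (fun _ => 1 / 2 ^ p) z :=
    hdom.mono' (hmeas.aestronglyMeasurable.sub (htip _).aestronglyMeasurable)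
      (ae_of_all _ fun z => hbound h r z hh h1 hr hrT)
  have hint : Integrable fun z => |kernelIncrement a h r z| ^ p := by
    refine (hdiff.add (htip (1 / 2 ^ p))).congr (ae_of_all _ fun z => ?_)
    simp only [Pi.add_apply, sub_add_cancel]
  have hval {s : Set ℝ} (hs : MeasurableSet s) (c : ℝ) :
      ∫ z, s.indicator (fun _ => c) z = c * volume.real s := by
    rw [integral_indicator_const c hs, smul_eq_mul, mul_comm]
  have hmain : ∫ z, (tipSlice h r).indicator (fun _ => (1 : ℝ) / 2 ^ p) z
      = 1 / 2 ^ p * tipLength h r := by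
    rw [hval (measurableSet_tipSlice h r), volume_real_tipSlice]
  rw [← hmain, ← integral_sub hint (htip _)]
  refine (norm_integral_le_of_norm_le (f := fun z => |kernelIncrement a h r z| ^ p
      - (tipSlice h r).indicator (fun _ => 1 / 2 ^ p) z) hdom
    (ae_of_all _ fun z => hbound h r z hh h1 hr hrT)).trans ?_
  rw [integral_add' (((htip (K * h)).add hleft).add hright) hcone,
    integral_add' ((htip (K * h)).add hleft) hright, integral_add' (htip (K * h)) hleft,
    hval (measurableSet_tipSlice h r), volume_real_tipSlice, hval measurableSet_Ioc,
    hval measurableSet_Ico, hval measurableSet_Ioc, Real.volume_real_Ioc, Real.volume_real_Ico,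
    Real.volume_real_Ioc, max_eq_left (by linarith), max_eq_left (by linarith),
    max_eq_left (by linarith)]
  have hpow : h ^ (1 + p) = h * h ^ p := by rw [Real.rpow_add hh, Real.rpow_one]
  have hlen : 0 ≤ tipLength h r := le_max_right _ _
  have hX : 0 ≤ K * h * tipLength h r := by positivity
  have hY : 0 ≤ K * (h * h ^ p) := by positivity
  rw [hpow]
  nlinarith [mul_nonneg hX hT.le, mul_nonneg hY (sub_nonneg.2 hrT)]

/-- The space-time estimate in the reduced variables. -/
lemma exists_abs_integral_integral_kernelIncrement_sub_le (a p T : ℝ) (hp : 1 ≤ p) (hT : 0 < T) :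
    ∃ C : ℝ, 0 < C ∧ ∀ h t : ℝ, 0 < h → h ≤ 1 → 2 * h ≤ t → t ≤ T →
      |(∫ r in (0 : ℝ)..t, ∫ z, |kernelIncrement a h r z| ^ p) - 1 / 2 ^ p * (2 * h ^ 2)| ≤
        C * (h ^ 3 + h ^ (1 + p)) := by
  obtain ⟨K, hK, hbound⟩ := exists_abs_integral_kernelIncrement_sub_le a p T hp hT
  refine ⟨K * (2 + T), by positivity, fun h t hh h1 hht htT => ?_⟩
  have ht : 0 < t := by linarith
  have hcont := continuous_tipLength h
  have hmain : IntervalIntegrable (fun r => 1 / 2 ^ p * tipLength h r) volume 0 t :=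
    (hcont.const_mul _).intervalIntegrable _ _
  have hdom : IntervalIntegrable (fun r => K * h * tipLength h r + K * h ^ (1 + p)) volume 0 t :=
    ((hcont.const_mul _).add_const _).intervalIntegrable _ _
  have hmeas : StronglyMeasurable fun r => ∫ z, |kernelIncrement a h r z| ^ p :=
    StronglyMeasurable.integral_prod_right
      (((measurable_kernelIncrement a h).abs.pow_const p).stronglyMeasurable)
  have hle : ∀ᵐ r, r ∈ Set.Ioc 0 t →
      ‖(∫ z, |kernelIncrement a h r z| ^ p) - 1 / 2 ^ p * tipLength h r‖ ≤
        K * h * tipLength h r + K * h ^ (1 + p) :=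
    ae_of_all _ fun r hr => hbound h r hh h1 hr.1 (hr.2.trans htT)
  have hdiff : IntervalIntegrable (fun r => (∫ z, |kernelIncrement a h r z| ^ p)
      - 1 / 2 ^ p * tipLength h r) volume 0 t := by
    refine hdom.mono_fun' (hmeas.aestronglyMeasurable.sub
      (hcont.const_mul _).aestronglyMeasurable) ?_
    rw [Set.uIoc_of_le ht.le]
    exact (ae_restrict_iff' measurableSet_Ioc).2 hle
  have hint : IntervalIntegrable (fun r => ∫ z, |kernelIncrement a h r z| ^ p) volume 0 t := by
    simpa using hdiff.add hmain
  have hval : ∫ r in (0 : ℝ)..t, 1 / 2 ^ p * tipLength h r = 1 / 2 ^ p * (2 * h ^ 2) := by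
    rw [intervalIntegral.integral_const_mul, integral_tipLength hh.le hht]
  rw [← hval, ← intervalIntegral.integral_sub hint hmain]
  refine (intervalIntegral.norm_integral_le_of_norm_le ht.le hle hdom).trans ?_
  rw [intervalIntegral.integral_add ((hcont.const_mul _).intervalIntegrable _ _) (by simp),
    intervalIntegral.integral_const_mul, integral_tipLength hh.le hht,
    intervalIntegral.integral_const, smul_eq_mul, sub_zero]
  have hX : 0 ≤ K * h ^ 3 := by positivity
  have hY : 0 ≤ K * h ^ (1 + p) := by positivity
  nlinarith [mul_nonneg hX hT.le, mul_nonneg hY (sub_nonneg.2 htT)]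

theorem stmt8 (a : ℝ) (p : ℝ) (hp : 1 ≤ p) (T : ℝ) (hT : 0 < T) :
    ∃ C : ℝ, 0 < C ∧ ∀ t ∈ Set.Ioc (0 : ℝ) T, ∀ x : ℝ, ∀ ε : ℝ,
      0 < ε → ε ≤ min 1 (t / Real.sqrt 2) →
      |(∫ s in Set.Ioc (0 : ℝ) t, ∫ y : ℝ,
          |dampedKernel a (t - s) (x - y)
            - dampedKernel a (t - ε / Real.sqrt 2 - s) (x + ε / Real.sqrt 2 - y)
            - dampedKernel a (t - ε / Real.sqrt 2 - s) (x - ε / Real.sqrt 2 - y)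
            + dampedKernel a (t - Real.sqrt 2 * ε - s) (x - y)| ^ p)
        - ε ^ 2 / 2 ^ p| ≤ C * (ε ^ 3 + ε ^ (1 + p)) := by
  obtain ⟨C, hC, hbound⟩ := exists_abs_integral_integral_kernelIncrement_sub_le a p T hp hT
  refine ⟨C, hC, fun t ht x ε hε hεt => ?_⟩
  have hs : 0 < Real.sqrt 2 := by positivity
  have hs2 : Real.sqrt 2 ^ 2 = 2 := Real.sq_sqrt (by norm_num)
  have hs1 : 1 ≤ Real.sqrt 2 := Real.one_le_sqrt.2 (by norm_num)
  set h := ε / Real.sqrt 2 with hh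
  have hpos : 0 < h := by positivity
  have hsε : Real.sqrt 2 * ε = 2 * h := by
    rw [hh]
    field_simp
    linarith
  have hsq : ε ^ 2 = 2 * h ^ 2 := by
    rw [hh, div_pow, hs2]; ring
  have hhε : h ≤ ε := div_le_self hε.le hs1
  have hε1 : ε ≤ 1 := hεt.trans (min_le_left _ _)
  have hht : 2 * h ≤ t := by
    rw [← hsε, mul_comm]
    exact (le_div_iff₀ hs).1 (hεt.trans (min_le_right _ _))
  have hslice (s : ℝ) : ∫ y : ℝ, |dampedKernel a (t - s) (x - y)
            - dampedKernel a (t - h - s) (x + h - y)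
            - dampedKernel a (t - h - s) (x - h - y)
            + dampedKernel a (t - Real.sqrt 2 * ε - s) (x - y)| ^ p
      = ∫ z, |kernelIncrement a h (t - s) z| ^ p := by
    rw [← integral_sub_left_eq_self (fun z => |kernelIncrement a h (t - s) z| ^ p) volume x]
    congr 1
    funext y
    rw [kernelIncrement, hsε, sub_right_comm t h s, sub_right_comm t (2 * h) s,
      sub_right_comm x h y, add_sub_right_comm x h y]
  simp only [hslice]
  rw [← intervalIntegral.integral_of_le ht.1.le,
    intervalIntegral.integral_comp_sub_left (fun r => ∫ z, |kernelIncrement a h r z| ^ p) t,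
    sub_self, sub_zero, hsq, div_eq_mul_one_div, mul_comm (2 * h ^ 2)]
  refine (hbound h t hpos (hhε.trans hε1) hht ht.2).trans ?_
  gcongr
end

section
/- For every t > 0, every x ∈ ℝ and every ε with 0 < ε ≤ t/√2, the set D₄ := {(s, y) ∈ ℝ × ℝ : 0 ≤ s ≤ t, |x − y| ≤ t − s, |x + ε/√2 − y| ≥ t − ε/√2 − s, |x − ε/√2 − y| ≥ t − ε/√2 − s} has two-dimensional Lebesgue measure exactly ε². -/
open MeasureTheory Real

/-- A slice of the difference of cones is, up to its two extreme points, an interval. -/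
theorem volume_cone_diff_slice {t x a : ℝ} (hat : 2 * a ≤ t) (s : ℝ) :
    volume {y : ℝ | 0 ≤ s ∧ s ≤ t ∧ |x - y| ≤ t - s
        ∧ t - a - s ≤ |x + a - y| ∧ t - a - s ≤ |x - a - y|}
      = ENNReal.ofReal (2 * min (t - s) (2 * a - (t - s))) := by
  set m := min (t - s) (2 * a - (t - s))
  have hIcc : volume (Set.Icc (x - m) (x + m)) = ENNReal.ofReal (2 * m) := by
    rw [Real.volume_Icc]
    ring_nf
  have hm₁ : m ≤ t - s := min_le_left _ _
  have hm₂ : m ≤ 2 * a - (t - s) := min_le_right _ _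
  apply le_antisymm
  · calc _ ≤ volume (Set.Icc (x - m) (x + m) ∪ {x - (t - s), x + (t - s)}) := by
          apply measure_mono
          rintro y ⟨-, -, h₁, h₂, h₃⟩
          obtain ⟨h₁l, h₁r⟩ := abs_le.mp h₁
          by_cases hl : y = x - (t - s)
          · exact Or.inr (Or.inl hl)
          by_cases hr : y = x + (t - s)
          · exact Or.inr (Or.inr hr)
          have hl' : x - (t - s) < y := lt_of_le_of_ne (by linarith) (Ne.symm hl)
          have hr' : y < x + (t - s) := lt_of_le_of_ne (by linarith) hr
          have hxy : y - x ≤ m ∧ x - y ≤ m := by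
            constructor <;> refine le_min (by linarith) ?_ <;>
              rcases le_abs.mp h₂ with h₂ | h₂ <;> rcases le_abs.mp h₃ with h₃ | h₃ <;> linarith
          exact Or.inl ⟨by linarith [hxy.2], by linarith [hxy.1]⟩
      _ ≤ volume (Set.Icc (x - m) (x + m)) + volume {x - (t - s), x + (t - s)} :=
          measure_union_le _ _
      _ = _ := by rw [hIcc, (Set.toFinite {x - (t - s), x + (t - s)}).measure_zero, add_zero]
  · rw [← hIcc]
    apply measure_mono
    rintro y ⟨hl, hr⟩
    exact ⟨by linarith, by linarith, abs_le.mpr ⟨by linarith, by linarith⟩,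
      le_abs.mpr (Or.inl (by linarith)), le_abs.mpr (Or.inr (by linarith))⟩

theorem lintegral_tent {t a : ℝ} (ha : 0 ≤ a) :
    ∫⁻ s : ℝ, ENNReal.ofReal (2 * min (t - s) (2 * a - (t - s))) = ENNReal.ofReal (2 * a ^ 2) := by
  have hcont : Continuous fun s : ℝ => 2 * min (t - s) (2 * a - (t - s)) := by fun_prop
  have hsupp : Function.support
      (fun s : ℝ => ENNReal.ofReal (2 * min (t - s) (2 * a - (t - s)))) ⊆
        Set.Ioc (t - 2 * a) t := by
    intro s hs
    have h := lt_min_iff.mp (pos_of_mul_pos_right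
      (ENNReal.ofReal_pos.mp (pos_iff_ne_zero.mpr hs)) zero_le_two)
    exact ⟨by linarith [h.2], by linarith [h.1]⟩
  rw [← setLIntegral_eq_of_support_subset hsupp,
    ← ofReal_integral_eq_lintegral_ofReal
      (hcont.integrableOn_Ioc) ?_, ← intervalIntegral.integral_of_le (by linarith)]
  · congr 1
    rw [← intervalIntegral.integral_add_adjacent_intervals (b := t - a)
      (hcont.intervalIntegrable _ _) (hcont.intervalIntegrable _ _)]
    have h₁ : ∫ s in (t - 2 * a)..(t - a), 2 * min (t - s) (2 * a - (t - s)) =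
        ∫ s in (t - 2 * a)..(t - a), 2 * ((2 * a - t) + s) := by
      apply intervalIntegral.integral_congr
      intro s hs
      rw [Set.uIcc_of_le (by linarith)] at hs
      simp only
      rw [min_eq_right (by linarith [hs.2])]
      ring
    have h₂ : ∫ s in (t - a)..t, 2 * min (t - s) (2 * a - (t - s)) =
        ∫ s in (t - a)..t, 2 * (t - s) := by
      apply intervalIntegral.integral_congr
      intro s hs
      rw [Set.uIcc_of_le (by linarith)] at hs
      simp only
      rw [min_eq_left (by linarith [hs.1])]
    rw [h₁, h₂, intervalIntegral.integral_const_mul, intervalIntegral.integral_const_mul,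
      intervalIntegral.integral_add (by simp) (by simp),
      intervalIntegral.integral_sub (f := fun _ => t) (g := fun s => s) (by simp) (by simp)]
    simp only [intervalIntegral.integral_const, integral_id, smul_eq_mul]
    ring
  · filter_upwards [ae_restrict_mem measurableSet_Ioc] with s hs
    exact mul_nonneg zero_le_two (le_min (by linarith [hs.2]) (by linarith [hs.1]))

theorem stmt10 (t x ε : ℝ) (ht : 0 < t) (hε : 0 < ε) (hεt : ε ≤ t / Real.sqrt 2) :
    volume {p : ℝ × ℝ | 0 ≤ p.1 ∧ p.1 ≤ t ∧ |x - p.2| ≤ t - p.1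
        ∧ t - ε / Real.sqrt 2 - p.1 ≤ |x + ε / Real.sqrt 2 - p.2|
        ∧ t - ε / Real.sqrt 2 - p.1 ≤ |x - ε / Real.sqrt 2 - p.2|}
      = ENNReal.ofReal (ε ^ 2) := by
  have hsqrt : 0 < √(2 : ℝ) := by positivity
  have hsq : √(2 : ℝ) ^ 2 = 2 := Real.sq_sqrt zero_le_two
  have hε_eq : ε ^ 2 = 2 * (ε / √2) ^ 2 := by
    rw [div_pow, hsq]
    ring
  have hat : 2 * (ε / √2) ≤ t := by
    rw [le_div_iff₀ hsqrt] at hεt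
    calc 2 * (ε / √2) = ε * √2 := by
          field_simp
          rw [hsq]
      _ ≤ t := hεt
  have ha : 0 ≤ ε / √2 := by positivity
  rw [hε_eq]
  generalize ε / √2 = a at hat ha
  rw [Measure.volume_eq_prod, Measure.prod_apply, ← lintegral_tent ha (t := t)]
  · exact lintegral_congr fun s => volume_cone_diff_slice hat s
  · apply IsClosed.measurableSet
    simp only [Set.ofPred_and]
    repeat' apply IsClosed.inter
    all_goals exact isClosed_le (by fun_prop) (by fun_prop)
end

section
/- For every a ∈ ℝ, every real p ≥ 1 and every T > 0 there exists a constant C > 0 such that for all t ∈ (0, T], all x ∈ ℝ, and all ε with 0 < ε ≤ min(1, t/√2): |∫∫_{D₄} 2^{−p}·e^{−ap(t−s)/2} ds dy − ε²/2^p| ≤ C·ε³, where D₄ := {(s, y) : 0 ≤ s ≤ t, |x − y| ≤ t − s, |x + ε/√2 − y| ≥ t − ε/√2 − s, |x − ε/√2 − y| ≥ t − ε/√2 − s}. -/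
open MeasureTheory Real

/-- The graph of a continuous real function is Lebesgue-null in the plane. -/
lemma ae_snd_ne_of_continuous {f : ℝ → ℝ} (hf : Continuous f) :
    ∀ᵐ z : ℝ × ℝ, z.2 ≠ f z.1 := by
  have hm : MeasurableSet {z : ℝ × ℝ | z.2 = f z.1} :=
    (isClosed_eq continuous_snd (hf.comp continuous_fst)).measurableSet
  rw [ae_iff]
  simp only [ne_eq, not_not]
  rw [Measure.volume_eq_prod, Measure.measure_prod_null hm]
  filter_upwards with s
  simp [Set.preimage]

/-- The integral of a tent function of half-width `d`. -/
lemma integral_tent {d : ℝ} (hd : 0 ≤ d) (t : ℝ) :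
    ∫ s in (t - 2 * d)..t, 2 * min (t - s) (s - (t - 2 * d)) = 2 * d ^ 2 := by
  have hi : ∀ b c : ℝ, IntervalIntegrable
      (fun s => 2 * min (t - s) (s - (t - 2 * d))) volume b c := fun b c =>
    Continuous.intervalIntegrable (by fun_prop) b c
  rw [← intervalIntegral.integral_add_adjacent_intervals (hi (t - 2 * d) (t - d)) (hi (t - d) t)]
  have h1 : ∫ s in (t - 2 * d)..(t - d), 2 * min (t - s) (s - (t - 2 * d))
      = ∫ s in (t - 2 * d)..(t - d), (2 * s - 2 * (t - 2 * d)) := by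
    refine intervalIntegral.integral_congr fun s hs => ?_
    rw [Set.uIcc_of_le (by linarith)] at hs
    have := hs.2
    rw [min_eq_right (by linarith)]
    ring
  have h2 : ∫ s in (t - d)..t, 2 * min (t - s) (s - (t - 2 * d))
      = ∫ s in (t - d)..t, (2 * t - 2 * s) := by
    refine intervalIntegral.integral_congr fun s hs => ?_
    rw [Set.uIcc_of_le (by linarith)] at hs
    have := hs.1
    rw [min_eq_left (by linarith)]
    ring
  rw [h1, h2, intervalIntegral.integral_sub (Continuous.intervalIntegrable (by fun_prop) _ _)
      (Continuous.intervalIntegrable (by fun_prop) _ _),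
    intervalIntegral.integral_sub (Continuous.intervalIntegrable (by fun_prop) _ _)
      (Continuous.intervalIntegrable (by fun_prop) _ _)]
  rw [intervalIntegral.integral_const_mul 2 (fun s : ℝ => s),
    intervalIntegral.integral_const_mul 2 (fun s : ℝ => s), integral_id, integral_id,
    intervalIntegral.integral_const, intervalIntegral.integral_const]
  simp only [smul_eq_mul]
  ring

/-- The open square with top vertex `(t, x)`, sides along the characteristics, and
diagonals of length `2 * d`. -/
def characteristicSquare (t x d : ℝ) : Set (ℝ × ℝ) :=
  regionBetween (fun s => x - min (t - s) (s - (t - 2 * d)))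
    (fun s => x + min (t - s) (s - (t - 2 * d))) (Set.Ioc (t - 2 * d) t)

lemma measurableSet_characteristicSquare (t x d : ℝ) :
    MeasurableSet (characteristicSquare t x d) :=
  measurableSet_regionBetween (Continuous.measurable (by fun_prop))
    (Continuous.measurable (by fun_prop)) measurableSet_Ioc

lemma volume_characteristicSquare (t x : ℝ) {d : ℝ} (hd : 0 ≤ d) :
    volume (characteristicSquare t x d) = ENNReal.ofReal (2 * d ^ 2) := by
  rw [characteristicSquare, Measure.volume_eq_prod, volume_regionBetween_eq_integral
    (Continuous.integrableOn_Ioc (by fun_prop)) (Continuous.integrableOn_Ioc (by fun_prop))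
    measurableSet_Ioc]
  · rw [← integral_tent hd t, intervalIntegral.integral_of_le (by linarith)]
    congr 2
    ext s
    simp only [Pi.sub_apply]
    ring
  · intro s hs
    have : 0 ≤ min (t - s) (s - (t - 2 * d)) :=
      le_min (by linarith [hs.2]) (by linarith [hs.1])
    linarith

/-- The part of the backward cone of `(t, x)` outside the two cones shifted by `d` along the
characteristics is, up to a null set, a square. -/
lemma cone_diff_shifted_cones_ae_eq {t d : ℝ} (x : ℝ) (hdt : 2 * d ≤ t) :
    {q : ℝ × ℝ | 0 ≤ q.1 ∧ q.1 ≤ t ∧ |x - q.2| ≤ t - q.1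
        ∧ t - d - q.1 ≤ |x + d - q.2| ∧ t - d - q.1 ≤ |x - d - q.2|}
      =ᵐ[volume] characteristicSquare t x d := by
  filter_upwards [ae_snd_ne_of_continuous (f := fun s => x + (t - s)) (by fun_prop),
    ae_snd_ne_of_continuous (f := fun s => x - (t - s)) (by fun_prop),
    ae_snd_ne_of_continuous (f := fun s => x + (s - (t - 2 * d))) (by fun_prop),
    ae_snd_ne_of_continuous (f := fun s => x - (s - (t - 2 * d))) (by fun_prop)]
    with ⟨s, y⟩ h1 h2 h3 h4
  simp only at h1 h2 h3 h4
  apply propext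
  change (0 ≤ s ∧ s ≤ t ∧ |x - y| ≤ t - s ∧ t - d - s ≤ |x + d - y| ∧ t - d - s ≤ |x - d - y|) ↔
    ((t - 2 * d < s ∧ s ≤ t) ∧ x - min (t - s) (s - (t - 2 * d)) < y ∧
      y < x + min (t - s) (s - (t - 2 * d)))
  rw [sub_lt_comm (a := x), ← sub_lt_iff_lt_add', lt_min_iff, lt_min_iff, abs_le, le_abs, le_abs]
  constructor
  · rintro ⟨-, hst, ⟨h5, h6⟩, h7, h8⟩
    have h1' : y < x + (t - s) := lt_of_le_of_ne (by linarith) h1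
    have h2' : x - (t - s) < y := lt_of_le_of_ne (by linarith) h2.symm
    have h3' : y < x + (s - (t - 2 * d)) :=
      lt_of_le_of_ne (by rcases h7 with h | h <;> rcases h8 with h' | h' <;> linarith) h3
    have h4' : x - (s - (t - 2 * d)) < y :=
      lt_of_le_of_ne (by rcases h7 with h | h <;> rcases h8 with h' | h' <;> linarith) h4.symm
    refine ⟨⟨?_, ?_⟩, ⟨?_, ?_⟩, ?_, ?_⟩ <;> linarith
  · rintro ⟨⟨h5, h6⟩, ⟨h7, h8⟩, h9, h10⟩
    refine ⟨by linarith, h6, ⟨by linarith, by linarith⟩, Or.inl ?_, Or.inr ?_⟩ <;> linarith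

theorem stmt11 (a : ℝ) (p : ℝ) (hp : 1 ≤ p) (T : ℝ) (hT : 0 < T) :
    ∃ C : ℝ, 0 < C ∧ ∀ t ∈ Set.Ioc (0 : ℝ) T, ∀ x : ℝ, ∀ ε : ℝ,
      0 < ε → ε ≤ min 1 (t / Real.sqrt 2) →
      |(∫ z in {q : ℝ × ℝ | 0 ≤ q.1 ∧ q.1 ≤ t ∧ |x - q.2| ≤ t - q.1
            ∧ t - ε / Real.sqrt 2 - q.1 ≤ |x + ε / Real.sqrt 2 - q.2|
            ∧ t - ε / Real.sqrt 2 - q.1 ≤ |x - ε / Real.sqrt 2 - q.2|},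
          (2 : ℝ) ^ (-p) * Real.exp (-(a * p * (t - z.1)) / 2))
        - ε ^ 2 / 2 ^ p| ≤ C * ε ^ 3 := by
  set c : ℝ := (2 : ℝ) ^ (-p) with hc
  have hc0 : 0 < c := by positivity
  set k : ℝ := |a * p| with hk
  have hk0 : 0 ≤ k := abs_nonneg _
  refine ⟨c * (k * exp k) + 1, by positivity, ?_⟩
  intro t _ x ε hε hεm
  obtain ⟨hε1, hεt⟩ := le_min_iff.1 hεm
  have hs2 : 0 < √2 := by positivity
  have hsq : √2 ^ 2 = 2 := sq_sqrt (by norm_num)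
  set d : ℝ := ε / √2 with hd
  have hd0 : 0 < d := by positivity
  have hεd : ε = d * √2 := by rw [hd]; field_simp
  have hdsq : 2 * d ^ 2 = ε ^ 2 := by rw [hεd, mul_pow, hsq]; ring
  have hdt : 2 * d ≤ t := by
    rw [le_div_iff₀ hs2, hεd] at hεt
    nlinarith
  have hdε : d ≤ ε := by
    rw [hεd]
    nlinarith [one_le_sqrt.2 (by norm_num : (1 : ℝ) ≤ 2)]
  rw [setIntegral_congr_set (cone_diff_shifted_cones_ae_eq x hdt)]
  have hvol := volume_characteristicSquare t x hd0.le
  have hreal : volume.real (characteristicSquare t x d) = ε ^ 2 := by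
    rw [measureReal_def, hvol, ENNReal.toReal_ofReal (by positivity), hdsq]
  have hfin : volume (characteristicSquare t x d) < ⊤ := hvol ▸ ENNReal.ofReal_lt_top
  have hbound : ∀ z ∈ characteristicSquare t x d,
      ‖c * exp (-(a * p * (t - z.1)) / 2) - c‖ ≤ c * (k * exp k) * ε := by
    intro z hz
    obtain ⟨⟨hz1, hz2⟩, -⟩ := hz
    set r : ℝ := -(a * p * (t - z.1)) / 2 with hr
    have hrk : |r| ≤ k * ε := by
      rw [hr, abs_div, abs_neg, abs_mul, ← hk, abs_of_nonneg (by linarith : 0 ≤ t - z.1),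
        abs_of_pos (by norm_num : (0 : ℝ) < 2)]
      nlinarith
    have hrk' : |r| ≤ k := hrk.trans (mul_le_of_le_one_right hk0 hε1)
    have hexp : |exp r - 1| ≤ |r| * exp |r| := by
      have := Complex.norm_exp_sub_sum_le_norm_mul_exp (r : ℂ) 1
      rw [Finset.sum_range_one, pow_zero, Nat.factorial_zero, Nat.cast_one, div_one, pow_one,
        Complex.norm_real, norm_eq_abs] at this
      exact_mod_cast this
    calc ‖c * exp r - c‖ = c * |exp r - 1| := by
          rw [← mul_sub_one, norm_eq_abs, abs_mul, abs_of_pos hc0]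
      _ ≤ c * ((k * ε) * exp k) := by gcongr; exact hexp.trans (by gcongr)
      _ = c * (k * exp k) * ε := by ring
  have hbase := norm_setIntegral_le_of_norm_le_const hfin hbound
  have hconst : IntegrableOn (fun _ : ℝ × ℝ => c) (characteristicSquare t x d) :=
    integrableOn_const hfin.ne
  have hdiff : IntegrableOn (fun z : ℝ × ℝ => c * exp (-(a * p * (t - z.1)) / 2) - c)
      (characteristicSquare t x d) :=
    Measure.integrableOn_of_bounded hfin.ne
      (Continuous.aestronglyMeasurable (by fun_prop))
      ((ae_restrict_iff' (measurableSet_characteristicSquare t x d)).2 (ae_of_all _ hbound))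
  have hsplit := integral_add hdiff hconst
  simp only [sub_add_cancel, setIntegral_const, hreal, smul_eq_mul] at hsplit
  rw [hreal, norm_eq_abs] at hbase
  have hdiv : ε ^ 2 / 2 ^ p = ε ^ 2 * c := by
    rw [hc, rpow_neg (by norm_num), div_eq_mul_inv]
  rw [hsplit, hdiv, add_sub_cancel_right]
  have : 0 ≤ ε ^ 3 := by positivity
  calc _ ≤ _ := hbase
    _ ≤ _ := by linarith
end

section
/- For every a ∈ ℝ, every real p ≥ 1 and every T > 0 there exists a constant C > 0 such that for all t ∈ (0, T], all x ∈ ℝ, and all ε with 0 < ε ≤ min(1, t/√2): ∫∫_{D₁} |(1/2)·e^{−a(t−s)/2} − (1/2)·e^{−a(t−ε/√2−s)/2}|^p ds dy ≤ C·ε^{1+p}, where D₁ := {(s, y) : 0 ≤ s ≤ t, |x − y| ≤ t − s, |x + ε/√2 − y| < t − ε/√2 − s, |x − ε/√2 − y| ≥ t − ε/√2 − s}. -/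
open MeasureTheory Real

/-- The exponential is `exp M`-Lipschitz on `(-∞, M]`. -/
lemma abs_exp_sub_exp_le_of_le {u v M : ℝ} (hu : u ≤ M) (hv : v ≤ M) :
    |exp u - exp v| ≤ exp M * |u - v| := by
  wlog huv : v ≤ u generalizing u v
  · rw [abs_sub_comm, abs_sub_comm u v]
    exact this hv hu (le_of_not_ge huv)
  rw [abs_of_nonneg (sub_nonneg.2 (exp_le_exp.2 huv)), abs_of_nonneg (sub_nonneg.2 huv)]
  have h₁ : exp v = exp u * exp (v - u) := by rw [← exp_add]; ring_nf
  calc exp u - exp v = exp u * (1 - exp (v - u)) := by rw [h₁]; ring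
    _ ≤ exp u * (u - v) :=
      mul_le_mul_of_nonneg_left (by linarith [add_one_le_exp (v - u)]) (exp_pos u).le
    _ ≤ exp M * (u - v) :=
      mul_le_mul_of_nonneg_right (exp_le_exp.2 hu) (sub_nonneg.2 huv)

/-- The area of a region of constant vertical width `w ≥ 0` over `[0, t]`. -/
lemma volume_regionBetween_Icc_add_const {f : ℝ → ℝ} (hf : Continuous f) {t w : ℝ}
    (ht : 0 ≤ t) (hw : 0 ≤ w) :
    volume (regionBetween f (fun s => f s + w) (Set.Icc 0 t)) = ENNReal.ofReal (t * w) := by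
  rw [Measure.volume_eq_prod, volume_regionBetween_eq_integral (g := fun s => f s + w)
    hf.continuousOn.integrableOn_Icc
    (hf.add continuous_const).continuousOn.integrableOn_Icc
    measurableSet_Icc (fun s _ => le_add_of_nonneg_right hw)]
  simp [ht]

theorem stmt12 (a : ℝ) (p : ℝ) (hp : 1 ≤ p) (T : ℝ) (hT : 0 < T) :
    ∃ C : ℝ, 0 < C ∧ ∀ t ∈ Set.Ioc (0 : ℝ) T, ∀ x : ℝ, ∀ ε : ℝ,
      0 < ε → ε ≤ min 1 (t / Real.sqrt 2) →
      (∫ z in {q : ℝ × ℝ | 0 ≤ q.1 ∧ q.1 ≤ t ∧ |x - q.2| ≤ t - q.1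
            ∧ |x + ε / Real.sqrt 2 - q.2| < t - ε / Real.sqrt 2 - q.1
            ∧ t - ε / Real.sqrt 2 - q.1 ≤ |x - ε / Real.sqrt 2 - q.2|},
          |(1 / 2 : ℝ) * Real.exp (-(a * (t - z.1)) / 2)
            - (1 / 2 : ℝ) * Real.exp (-(a * (t - ε / Real.sqrt 2 - z.1)) / 2)| ^ p)
        ≤ C * ε ^ (1 + p) := by
  set K : ℝ := exp (|a| * T / 2) * |a| with hK
  have hK0 : 0 ≤ K := by positivity
  refine ⟨K ^ p * (3 * T) + 1, by positivity, ?_⟩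
  rintro t ⟨ht0, htT⟩ x ε hε -
  have hh0 : 0 < ε / √2 := by positivity
  have hhε : ε / √2 ≤ ε := div_le_self hε.le (one_le_sqrt.2 one_le_two)
  generalize ε / √2 = h at hh0 hhε ⊢
  set D : Set (ℝ × ℝ) := {q | 0 ≤ q.1 ∧ q.1 ≤ t ∧ |x - q.2| ≤ t - q.1
    ∧ |x + h - q.2| < t - h - q.1 ∧ t - h - q.1 ≤ |x - h - q.2|} with hD
  have hsub : D ⊆ regionBetween (fun s => x + t - 3 * h - s)
      (fun s => x + t - 3 * h - s + 3 * h) (Set.Icc 0 t) := by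
    rintro ⟨s, y⟩ ⟨h0, h1, -, h3, h4⟩
    simp only at h0 h1 h3 h4
    rw [abs_lt] at h3
    refine ⟨⟨h0, h1⟩, ?_, ?_⟩
    · rcases le_abs.1 h4 with h4 | h4 <;> simp only <;> linarith
    · simp only
      linarith
  have hvol : volume D ≤ ENNReal.ofReal (t * (3 * h)) :=
    (measure_mono hsub).trans_eq
      (volume_regionBetween_Icc_add_const (by fun_prop) ht0.le (by positivity))
  have hreal : volume.real D ≤ 3 * T * ε := by
    refine (ENNReal.toReal_le_of_le_ofReal (by positivity) hvol).trans ?_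
    calc t * (3 * h) ≤ T * (3 * ε) := by gcongr
      _ = 3 * T * ε := by ring
  have hexponent : ∀ r : ℝ, 0 ≤ r → r ≤ T → -(a * r) / 2 ≤ |a| * T / 2 := by
    intro r hr hrT
    have h₁ : -a * r ≤ |a| * r := mul_le_mul_of_nonneg_right (neg_le_abs a) hr
    have h₂ : |a| * r ≤ |a| * T := mul_le_mul_of_nonneg_left hrT (abs_nonneg a)
    linarith
  have hbound : ∀ z ∈ D, ‖|(1 / 2 : ℝ) * exp (-(a * (t - z.1)) / 2)
      - (1 / 2 : ℝ) * exp (-(a * (t - h - z.1)) / 2)| ^ p‖ ≤ (K * ε) ^ p := by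
    rintro ⟨s, y⟩ ⟨h0, -, -, h3, -⟩
    simp only at h0 h3 ⊢
    have hpos : 0 < t - h - s := (abs_nonneg _).trans_lt h3
    rw [norm_of_nonneg (by positivity)]
    gcongr
    rw [← mul_sub, abs_mul, abs_of_pos (by norm_num : (0 : ℝ) < 1 / 2)]
    have hlip := abs_exp_sub_exp_le_of_le
      (hexponent (t - s) (by linarith) (by linarith))
      (hexponent (t - h - s) hpos.le (by linarith))
    have hdiff : |-(a * (t - s)) / 2 - -(a * (t - h - s)) / 2| = |a| * h / 2 := by
      rw [show -(a * (t - s)) / 2 - -(a * (t - h - s)) / 2 = -(a * h / 2) by ring, abs_neg,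
        abs_div, abs_mul, abs_of_pos hh0, abs_two]
    rw [hdiff] at hlip
    have hKh : K * h ≤ K * ε := mul_le_mul_of_nonneg_left hhε hK0
    have hKh0 : 0 ≤ K * h := by positivity
    have hexpand : exp (|a| * T / 2) * (|a| * h / 2) = K * h / 2 := by rw [hK]; ring
    linarith
  calc _ ≤ (K * ε) ^ p * volume.real D :=
        (le_norm_self _).trans (norm_setIntegral_le_of_norm_le_const
          (hvol.trans_lt ENNReal.ofReal_lt_top) hbound)
    _ ≤ (K * ε) ^ p * (3 * T * ε) := by gcongr
    _ = K ^ p * (3 * T) * ε ^ (1 + p) := by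
      rw [mul_rpow hK0 hε.le, rpow_add hε, rpow_one]
      ring
    _ ≤ (K ^ p * (3 * T) + 1) * ε ^ (1 + p) := by
      gcongr
      linarith
end
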